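/- arXiv:1103.3515 — 2 statements merged into one kernel-verified Lean document; each statement's English description precedes it below -/
import Mathlib

section
/- Let (M, W, met, mr, ≺) be a routing metric with W nonempty. If the metric is strictly decreasing and has no fixed point, then the set M of metric values is infinite. -/
/-- The data of a routing metric: metric values `M`, edge weights `W`,
a metric function `met`, a maximum value `mr`, and a relation `lt` (the order `≺`). -/
structure MetricSpec (M W : Type) where
  met : M → W → M
  mr : M
  lt : M → M → Prop

namespace MetricSpec

variable {M W : Type}

/-- The utility condition for a metric value `m`: there is a sequence
`m_0 = mr, m_1, …, m_k = m` and weights `w_0, …, w_{k-1}` with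
`m_i = met (m_{i-1}) (w_{i-1})` for all `1 ≤ i ≤ k`. -/
def Reaches (S : MetricSpec M W) (m : M) : Prop :=
  ∃ (k : ℕ) (ms : ℕ → M) (ws : ℕ → W), ms 0 = S.mr ∧ ms k = m ∧
    ∀ i, 1 ≤ i → i ≤ k → ms i = S.met (ms (i - 1)) (ws (i - 1))

/-- `S` is a routing metric: `lt` is an irreflexive, transitive and total (strict) order,
`mr` is the maximum element of `M` w.r.t. `lt`, and every `m ≠ mr` satisfies the
utility condition. -/
def IsRoutingMetric (S : MetricSpec M W) : Prop :=
  (∀ m, ¬ S.lt m m) ∧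
  (∀ a b c, S.lt a b → S.lt b c → S.lt a c) ∧
  (∀ a b, S.lt a b ∨ S.lt b a ∨ a = b) ∧
  (∀ m, m ≠ S.mr → S.lt m S.mr) ∧
  (∀ m, m ≠ S.mr → S.Reaches m)

/-- A metric is bounded if `met m w ≺ m` or `met m w = m` for all `m`, `w`. -/
def Bounded (S : MetricSpec M W) : Prop :=
  ∀ m w, S.lt (S.met m w) m ∨ S.met m w = m

/-- A metric is monotonic if `m ≺ m'` implies `met m w ≺ met m' w` or
`met m w = met m' w`. -/
def Monotonic (S : MetricSpec M W) : Prop :=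
  ∀ m m' w, S.lt m m' → S.lt (S.met m w) (S.met m' w) ∨ S.met m w = S.met m' w

/-- A metric is strictly decreasing if for every `m`, either `met m w ≺ m` for all `w`,
or `met m w = m` for all `w`. -/
def StrictlyDecreasing (S : MetricSpec M W) : Prop :=
  ∀ m, (∀ w, S.lt (S.met m w) m) ∨ (∀ w, S.met m w = m)

/-- A metric value `m` is a fixed point if `met m w = m` for every `w`. -/
def IsFixedPoint (S : MetricSpec M W) (m : M) : Prop :=
  ∀ w, S.met m w = m

/-- A (maximizable) metric is strongly maximizable if `|M| = 1`, or `|M| ≥ 2`,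
the metric is strictly decreasing, and it has one and only one fixed point. -/
def StronglyMaximizable (S : MetricSpec M W) : Prop :=
  (∀ a b : M, a = b) ∨
    ((∃ a b : M, a ≠ b) ∧ S.StrictlyDecreasing ∧ ∃! m, S.IsFixedPoint m)

end MetricSpec

/-- If a routing metric with nonempty weight set is strictly decreasing and has no
fixed point, then the set of metric values is infinite. -/
theorem infinite_of_strictlyDecreasing_of_no_fixedPoint {M W : Type} (S : MetricSpec M W)
    (hS : S.IsRoutingMetric) (hW : Nonempty W)
    (hdec : S.StrictlyDecreasing) (hfix : ∀ m, ¬ S.IsFixedPoint m) :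
    Infinite M := by
  obtain ⟨hirr, htrans, -, -, -⟩ := hS
  obtain ⟨w⟩ := hW
  by_contra hinf
  have hfin : Finite M := not_infinite_iff_finite.mp hinf
  haveI : Std.Irrefl S.lt := ⟨hirr⟩
  haveI : IsTrans M S.lt := ⟨htrans⟩
  have hwf : WellFounded S.lt := Finite.wellFounded_of_trans_of_irrefl S.lt
  obtain ⟨m, -, hm⟩ := hwf.has_min Set.univ ⟨S.mr, trivial⟩
  rcases hdec m with h | h
  · exact hm _ trivial (h w)
  · exact hfix m h
end

section
/- Let (M, W, met, mr, ≺) be a bounded routing metric and let m ∈ M \ {mr}. Among all sequences m_0 = mr, m_1, …, m_k = m in M with weights w_0, …, w_{k-1} ∈ W satisfying m_i = met(m_{i-1}, w_{i-1}) for 1 ≤ i ≤ k (such a sequence exists by the utility condition), consider one of minimal length k. Then m_i ≺ m_{i-1} for every 1 ≤ i ≤ k; in particular the values m_0, m_1, …, m_k are pairwise distinct. -/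
/-- For a bounded routing metric and `m ≠ mr`, any minimal-length sequence
`m_0 = mr, …, m_k = m` with `m_i = met (m_{i-1}) (w_{i-1})` is strictly decreasing
(`m_i ≺ m_{i-1}` for `1 ≤ i ≤ k`); in particular its values are pairwise distinct. -/
theorem minimal_utility_sequence_strictly_decreasing {M W : Type} (S : MetricSpec M W)
    (hS : S.IsRoutingMetric) (hB : S.Bounded) (m : M) (hm : m ≠ S.mr)
    (k : ℕ) (ms : ℕ → M) (ws : ℕ → W)
    (h0 : ms 0 = S.mr) (hk : ms k = m)
    (hstep : ∀ i, 1 ≤ i → i ≤ k → ms i = S.met (ms (i - 1)) (ws (i - 1)))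
    (hmin : ∀ (k' : ℕ) (ms' : ℕ → M) (ws' : ℕ → W), ms' 0 = S.mr → ms' k' = m →
      (∀ i, 1 ≤ i → i ≤ k' → ms' i = S.met (ms' (i - 1)) (ws' (i - 1))) → k ≤ k') :
    (∀ i, 1 ≤ i → i ≤ k → S.lt (ms i) (ms (i - 1))) ∧
      (∀ i j, i ≤ k → j ≤ k → ms i = ms j → i = j) := by
  obtain ⟨hirr, htr, -, -, -⟩ := hS
  have key : ∀ i, 1 ≤ i → i ≤ k → S.lt (ms i) (ms (i - 1)) := by
    intro i hi hik
    obtain ⟨a, rfl⟩ : ∃ a, i = a + 1 := ⟨i - 1, by omega⟩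
    have hs := hstep (a + 1) hi hik
    simp only [Nat.add_sub_cancel] at hs ⊢
    rcases hB (ms a) (ws a) with h | h
    · rw [hs]; exact h
    · exfalso
      have heq : ms (a + 1) = ms a := hs.trans h
      have hle := hmin (k - 1) (fun j => if j ≤ a then ms j else ms (j + 1))
        (fun j => if j < a then ws j else ws (j + 1)) (by simpa using h0) (by
          by_cases hka : k - 1 ≤ a
          · have : k = a + 1 := by omega
            subst this
            simpa using heq.symm.trans hk
          · have : k - 1 + 1 = k := by omega
            simp only [if_neg hka, this, hk]) (by
          intro j hj hjk
          obtain ⟨b, rfl⟩ : ∃ b, j = b + 1 := ⟨j - 1, by omega⟩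
          simp only [Nat.add_sub_cancel]
          rcases lt_trichotomy b a with hb | hb | hb
          · rw [if_pos (by omega), if_pos (by omega), if_pos hb]
            exact hstep (b + 1) (by omega) (by omega)
          · subst hb
            rw [if_neg (by omega), if_pos (by omega), if_neg (by omega), ← heq]
            exact hstep (b + 1 + 1) (by omega) (by omega)
          · rw [if_neg (by omega), if_neg (by omega), if_neg (by omega)]
            exact hstep (b + 1 + 1) (by omega) (by omega))
      omega
  have lt_of : ∀ d i, i + d + 1 ≤ k → S.lt (ms (i + d + 1)) (ms i) := by
    intro d
    induction d with
    | zero => intro i h; exact key (i + 1) (by omega) (by omega)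
    | succ d ih =>
      intro i h
      exact htr _ _ _ (key (i + (d + 1) + 1) (by omega) h) (ih i (by omega))
  refine ⟨key, fun i j hi hj hij => ?_⟩
  rcases lt_trichotomy i j with h | h | h
  · obtain ⟨d, rfl⟩ := Nat.exists_eq_add_of_lt h
    have := lt_of d i hj
    rw [← hij] at this
    exact (hirr _ this).elim
  · exact h
  · obtain ⟨d, rfl⟩ := Nat.exists_eq_add_of_lt h
    have := lt_of d j hi
    rw [hij] at this
    exact (hirr _ this).elim
end
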